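/- Let d ≥ 1, α ∈ (1,2), and θ > 1 − α/2. Let f : ℝ^d → ℝ be continuously differentiable, and suppose there is a constant C₀ > 0 such that |∇f(x)| ≤ C₀ for all x ∈ ℝ^d and |f(x)| ≤ C₀(1+|x|²)^{(1−θ)/2} + C₀ for all x ∈ ℝ^d. Then there exists a constant C > 0 such that for every x ∈ ℝ^d, ∫_{ℝ^d∖{0}} [f(x+z) − f(x)]² C_{d,α} |z|^{−(α+d)} dz ≤ C ( 1 + (1+|x|²)^{1−θ} ), the integral being finite. -/

import Mathlib

open MeasureTheory

/-!
Let `β = max (1 - θ) 0`, so that `2β < α < 2` and `f(x)² ≲ ⟨x⟩^{2β}`, where `⟨x⟩² = 1 + |x|²`.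
The Lipschitz bound controls the increments of `f` with `|z| < 1` and the growth bound, together
with Peetre's inequality `⟨x + z⟩² ≤ 2 ⟨x⟩² ⟨z⟩²`, those with `|z| ≥ 1`. Hence
`|f(x + z) - f(x)|² ≲ ⟨x⟩^{2β} w(z)`, where `w(z)` is `|z|²` on the unit ball and `|z|^{2β}` outside
it. In polar coordinates `∫ w(z) |z|^{-(α+d)} dz` becomes a multiple of
`∫₀¹ r^{1-α} dr + ∫₁^∞ r^{2β-α-1} dr`, which is finite because `2β < α < 2`.
-/

open Module Set

open scoped NNReal

section RealPowers

variable {t : ℝ}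

lemma rpow_max_zero_le_one_add_rpow (ht : 0 ≤ t) (s : ℝ) : t ^ max s 0 ≤ 1 + t ^ s := by
  have hts : 0 ≤ t ^ s := by positivity
  rcases max_cases s 0 with ⟨h, -⟩ | ⟨h, -⟩ <;> rw [h]
  · linarith
  · rw [Real.rpow_zero]
    linarith

lemma one_add_rpow_le_two_mul_rpow_max_zero (ht : 1 ≤ t) (s : ℝ) :
    1 + t ^ s ≤ 2 * t ^ max s 0 := by
  have h_one : 1 ≤ t ^ max s 0 := Real.one_le_rpow ht (le_max_right s 0)
  have h_le : t ^ s ≤ t ^ max s 0 := Real.rpow_le_rpow_of_exponent_le ht (le_max_left s 0)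
  linarith

lemma sq_le_mul_rpow_max_zero {s a A : ℝ} (ht : 1 ≤ t) (ha : 0 ≤ a)
    (h : a ≤ A * t ^ (s / 2) + A) : a ^ 2 ≤ 4 * A ^ 2 * t ^ max s 0 := by
  have h_sq : (t ^ (s / 2)) ^ 2 = t ^ s := by
    rw [← Real.rpow_mul_natCast (by positivity), Nat.cast_ofNat, div_mul_cancel₀ s two_ne_zero]
  calc a ^ 2 ≤ (A * t ^ (s / 2) + A) ^ 2 := by gcongr
    _ ≤ 2 * ((A * t ^ (s / 2)) ^ 2 + A ^ 2) := add_sq_le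
    _ = 2 * A ^ 2 * (1 + t ^ s) := by rw [mul_pow, h_sq]; ring
    _ ≤ 2 * A ^ 2 * (2 * t ^ max s 0) := by
        gcongr
        exact one_add_rpow_le_two_mul_rpow_max_zero ht s
    _ = 4 * A ^ 2 * t ^ max s 0 := by ring

end RealPowers

/-- The radial profile `r²` for `r < 1` and `r^{2β}` for `r ≥ 1`. Integrability of
`z ↦ levyWeight β ‖z‖` against `ν` says that `ν` integrates `‖z‖²` near the origin, as a Lévy
measure does, and has a moment of order `2β` at infinity. -/
noncomputable def levyWeight (β r : ℝ) : ℝ := if r < 1 then r ^ 2 else r ^ (2 * β)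

section LevyWeight

variable {β r : ℝ}

lemma levyWeight_of_lt_one (hr : r < 1) : levyWeight β r = r ^ 2 := if_pos hr

lemma levyWeight_of_one_le (hr : 1 ≤ r) : levyWeight β r = r ^ (2 * β) := if_neg hr.not_gt

lemma levyWeight_nonneg (hr : 0 ≤ r) : 0 ≤ levyWeight β r := by
  unfold levyWeight
  split_ifs <;> positivity

lemma integrableOn_levyWeight_mul_rpow {α : ℝ} (hα : α < 2) (hβ : 2 * β < α) :
    IntegrableOn (fun r => levyWeight β r * r ^ (-(α + 1))) (Ioi 0) := by
  rw [← Ioo_union_Ici_eq_Ioi one_pos, integrableOn_union]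
  constructor
  · have h := (intervalIntegral.integrableOn_Ioo_rpow_iff (s := 2 + -(α + 1)) one_pos).2
      (by linarith)
    refine h.congr_fun (fun r hr => ?_) measurableSet_Ioo
    simp only [levyWeight_of_lt_one hr.2, Real.rpow_add hr.1, Real.rpow_two]
  · have h := integrableOn_Ioi_rpow_of_lt (a := 2 * β + -(α + 1)) (by linarith) one_pos
    rw [← integrableOn_Ici_iff_integrableOn_Ioi] at h
    refine h.congr_fun (fun r (hr : 1 ≤ r) => ?_) measurableSet_Ici
    simp only [levyWeight_of_one_le hr, Real.rpow_add (one_pos.trans_le hr)]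

end LevyWeight

section Increments

variable {E F : Type*} [NormedAddCommGroup E] [NormedAddCommGroup F] {f : E → F} {K : ℝ≥0}
  {A β : ℝ}

lemma one_add_norm_add_sq_rpow_le (hβ : 0 ≤ β) (x z : E) :
    (1 + ‖x + z‖ ^ 2) ^ β ≤ 2 ^ β * (1 + ‖x‖ ^ 2) ^ β * (1 + ‖z‖ ^ 2) ^ β := by
  have h_peetre : 1 + ‖x + z‖ ^ 2 ≤ 2 * (1 + ‖x‖ ^ 2) * (1 + ‖z‖ ^ 2) := calc
    1 + ‖x + z‖ ^ 2 ≤ 1 + (‖x‖ + ‖z‖) ^ 2 := by gcongr; exact norm_add_le x z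
    _ ≤ 1 + 2 * (‖x‖ ^ 2 + ‖z‖ ^ 2) := by gcongr; exact add_sq_le
    _ ≤ 2 * (1 + ‖x‖ ^ 2) * (1 + ‖z‖ ^ 2) := by nlinarith [sq_nonneg (‖x‖ * ‖z‖)]
  calc (1 + ‖x + z‖ ^ 2) ^ β ≤ (2 * (1 + ‖x‖ ^ 2) * (1 + ‖z‖ ^ 2)) ^ β := by gcongr
    _ = 2 ^ β * (1 + ‖x‖ ^ 2) ^ β * (1 + ‖z‖ ^ 2) ^ β := by
        rw [Real.mul_rpow (by positivity) (by positivity),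
          Real.mul_rpow (by positivity) (by positivity)]

lemma one_add_norm_add_sq_rpow_le_of_one_le_norm (hβ : 0 ≤ β) (x : E) {z : E} (hz : 1 ≤ ‖z‖) :
    (1 + ‖x + z‖ ^ 2) ^ β ≤ 4 ^ β * (1 + ‖x‖ ^ 2) ^ β * ‖z‖ ^ (2 * β) := by
  have h_norm : 1 + ‖z‖ ^ 2 ≤ 2 * ‖z‖ ^ 2 := by linarith [one_le_pow₀ hz (n := 2)]
  calc (1 + ‖x + z‖ ^ 2) ^ β
      ≤ 2 ^ β * (1 + ‖x‖ ^ 2) ^ β * (1 + ‖z‖ ^ 2) ^ β := one_add_norm_add_sq_rpow_le hβ x z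
    _ ≤ 2 ^ β * (1 + ‖x‖ ^ 2) ^ β * (2 * ‖z‖ ^ 2) ^ β := by gcongr
    _ = (2 * 2) ^ β * (1 + ‖x‖ ^ 2) ^ β * ‖z‖ ^ (2 * β) := by
        rw [Real.mul_rpow zero_le_two (sq_nonneg ‖z‖), Real.mul_rpow zero_le_two zero_le_two,
          Real.rpow_mul (norm_nonneg z), Real.rpow_two]
        ring
    _ = 4 ^ β * (1 + ‖x‖ ^ 2) ^ β * ‖z‖ ^ (2 * β) := by norm_num

lemma norm_add_sub_sq_le_of_lipschitzWith (hf : LipschitzWith K f) (x z : E) :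
    ‖f (x + z) - f x‖ ^ 2 ≤ K ^ 2 * ‖z‖ ^ 2 := by
  have h := hf.norm_sub_le (x + z) x
  rw [add_sub_cancel_left] at h
  calc ‖f (x + z) - f x‖ ^ 2 ≤ (K * ‖z‖) ^ 2 := by gcongr
    _ = K ^ 2 * ‖z‖ ^ 2 := mul_pow _ _ 2

lemma norm_add_sub_sq_le_of_one_le_norm (hβ : 0 ≤ β)
    (hg : ∀ x, ‖f x‖ ^ 2 ≤ A * (1 + ‖x‖ ^ 2) ^ β) (x : E) {z : E} (hz : 1 ≤ ‖z‖) :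
    ‖f (x + z) - f x‖ ^ 2 ≤ 2 * A * (4 ^ β + 1) * (1 + ‖x‖ ^ 2) ^ β * ‖z‖ ^ (2 * β) := by
  have hA : 0 ≤ A := by simpa using (sq_nonneg _).trans (hg 0)
  have h_far : 1 ≤ ‖z‖ ^ (2 * β) := Real.one_le_rpow hz (by positivity)
  calc ‖f (x + z) - f x‖ ^ 2 ≤ (‖f (x + z)‖ + ‖f x‖) ^ 2 := by gcongr; exact norm_sub_le _ _
    _ ≤ 2 * (‖f (x + z)‖ ^ 2 + ‖f x‖ ^ 2) := add_sq_le
    _ ≤ 2 * (A * (1 + ‖x + z‖ ^ 2) ^ β + A * (1 + ‖x‖ ^ 2) ^ β) := by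
        gcongr
        exacts [hg (x + z), hg x]
    _ ≤ 2 * (A * (4 ^ β * (1 + ‖x‖ ^ 2) ^ β * ‖z‖ ^ (2 * β)) +
          A * ((1 + ‖x‖ ^ 2) ^ β * ‖z‖ ^ (2 * β))) := by
        gcongr
        · exact one_add_norm_add_sq_rpow_le_of_one_le_norm hβ x hz
        · exact le_mul_of_one_le_right (by positivity) h_far
    _ = 2 * A * (4 ^ β + 1) * (1 + ‖x‖ ^ 2) ^ β * ‖z‖ ^ (2 * β) := by ring

lemma norm_add_sub_sq_le_levyWeight (hf : LipschitzWith K f) (hβ : 0 ≤ β)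
    (hg : ∀ x, ‖f x‖ ^ 2 ≤ A * (1 + ‖x‖ ^ 2) ^ β) (x z : E) :
    ‖f (x + z) - f x‖ ^ 2 ≤
      (K ^ 2 + 2 * A * (4 ^ β + 1)) * (1 + ‖x‖ ^ 2) ^ β * levyWeight β ‖z‖ := by
  have hA : 0 ≤ A := by simpa using (sq_nonneg _).trans (hg 0)
  rcases lt_or_ge ‖z‖ 1 with hz | hz
  · have hx : 1 ≤ (1 + ‖x‖ ^ 2) ^ β := Real.one_le_rpow (by simp) hβ
    rw [levyWeight_of_lt_one hz]
    calc ‖f (x + z) - f x‖ ^ 2 ≤ K ^ 2 * ‖z‖ ^ 2 := norm_add_sub_sq_le_of_lipschitzWith hf x z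
      _ ≤ (K ^ 2 + 2 * A * (4 ^ β + 1)) * (1 + ‖x‖ ^ 2) ^ β * ‖z‖ ^ 2 := by
        gcongr
        exact (le_add_of_nonneg_right (by positivity)).trans
          (le_mul_of_one_le_right (by positivity) hx)
  · rw [levyWeight_of_one_le hz]
    refine (norm_add_sub_sq_le_of_one_le_norm hβ hg x hz).trans ?_
    gcongr
    exact le_add_of_nonneg_left (by positivity)

variable [MeasurableSpace E] [OpensMeasurableSpace E] {ν : Measure E}

lemma integrable_norm_add_sub_sq (hν : Integrable (fun z => levyWeight β ‖z‖) ν)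
    (hf : LipschitzWith K f) (hβ : 0 ≤ β) (hg : ∀ x, ‖f x‖ ^ 2 ≤ A * (1 + ‖x‖ ^ 2) ^ β) (x : E) :
    Integrable (fun z => ‖f (x + z) - f x‖ ^ 2) ν := by
  have h_cont : Continuous fun z => ‖f (x + z) - f x‖ ^ 2 := by
    have := hf.continuous
    fun_prop
  refine (hν.const_mul ((K ^ 2 + 2 * A * (4 ^ β + 1)) * (1 + ‖x‖ ^ 2) ^ β)).mono'
    h_cont.aestronglyMeasurable (ae_of_all _ fun z => ?_)
  rw [Real.norm_of_nonneg (by positivity)]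
  exact norm_add_sub_sq_le_levyWeight hf hβ hg x z

lemma integral_norm_add_sub_sq_le (hν : Integrable (fun z => levyWeight β ‖z‖) ν)
    (hf : LipschitzWith K f) (hβ : 0 ≤ β) (hg : ∀ x, ‖f x‖ ^ 2 ≤ A * (1 + ‖x‖ ^ 2) ^ β) (x : E) :
    ∫ z, ‖f (x + z) - f x‖ ^ 2 ∂ν ≤
      (K ^ 2 + 2 * A * (4 ^ β + 1)) * (∫ z, levyWeight β ‖z‖ ∂ν) * (1 + ‖x‖ ^ 2) ^ β := by
  calc ∫ z, ‖f (x + z) - f x‖ ^ 2 ∂ν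
      ≤ ∫ z, (K ^ 2 + 2 * A * (4 ^ β + 1)) * (1 + ‖x‖ ^ 2) ^ β * levyWeight β ‖z‖ ∂ν :=
        integral_mono (integrable_norm_add_sub_sq hν hf hβ hg x) (hν.const_mul _)
          (norm_add_sub_sq_le_levyWeight hf hβ hg x)
    _ = (K ^ 2 + 2 * A * (4 ^ β + 1)) * (∫ z, levyWeight β ‖z‖ ∂ν) * (1 + ‖x‖ ^ 2) ^ β := by
        rw [integral_const_mul]
        ring

end Increments

section Stable

variable {E : Type*} [NormedAddCommGroup E] [NormedSpace ℝ E] [MeasurableSpace E]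

/-- The Lévy measure `|z|^{-(α + dim E)} μ(dz)` on `E ∖ {0}` of a rotationally symmetric `α`-stable
process, without the normalizing constant. -/
noncomputable def stableLevyMeasure (μ : Measure E) (α : ℝ) : Measure E :=
  (μ.restrict {z | z ≠ 0}).withDensity fun z => ENNReal.ofReal (‖z‖ ^ (-(α + finrank ℝ E)))

variable [OpensMeasurableSpace E] {μ : Measure E} {α : ℝ}

lemma integrable_stableLevyMeasure_iff {g : E → ℝ} :
    Integrable g (stableLevyMeasure μ α) ↔
      IntegrableOn (fun z => g z * ‖z‖ ^ (-(α + finrank ℝ E))) {z | z ≠ 0} μ := by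
  rw [stableLevyMeasure, integrable_withDensity_iff (by fun_prop) (by simp), IntegrableOn]
  simp only [ENNReal.toReal_ofReal (Real.rpow_nonneg (norm_nonneg _) _)]

lemma integral_stableLevyMeasure (g : E → ℝ) :
    ∫ z, g z ∂stableLevyMeasure μ α =
      ∫ z in {z | z ≠ 0}, g z * ‖z‖ ^ (-(α + finrank ℝ E)) ∂μ := by
  rw [stableLevyMeasure, integral_withDensity_eq_integral_toReal_smul (by fun_prop) (by simp)]
  simp only [ENNReal.toReal_ofReal (Real.rpow_nonneg (norm_nonneg _) _), smul_eq_mul, mul_comm]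

lemma integrable_levyWeight_stableLevyMeasure [BorelSpace E] [FiniteDimensional ℝ E]
    [μ.IsAddHaarMeasure] {β : ℝ} (hα : α < 2) (hβ : 2 * β < α) :
    Integrable (fun z => levyWeight β ‖z‖) (stableLevyMeasure μ α) := by
  rw [integrable_stableLevyMeasure_iff]
  rcases subsingleton_or_nontrivial E with _ | _
  · simp [Subsingleton.elim _ (0 : E)]
  · refine Integrable.integrableOn ?_
    rw [integrable_fun_norm_addHaar μ
      (f := fun r => levyWeight β r * r ^ (-(α + finrank ℝ E : ℝ)))]
    refine (integrableOn_levyWeight_mul_rpow hα hβ).congr_fun (fun r (hr : 0 < r) => ?_)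
      measurableSet_Ioi
    have h_jacobian : r ^ (-(α + 1)) = r ^ (finrank ℝ E - 1) * r ^ (-(α + finrank ℝ E : ℝ)) := by
      rw [← Real.rpow_natCast, ← Real.rpow_add hr, Nat.cast_pred finrank_pos]
      ring_nf
    simp only [h_jacobian, smul_eq_mul]
    ring

end Stable

lemma lipschitzWith_of_norm_gradient_le {E : Type*} [NormedAddCommGroup E] [InnerProductSpace ℝ E]
    [CompleteSpace E] {f : E → ℝ} {C : ℝ} (hf : Differentiable ℝ f)
    (hC : ∀ x, ‖gradient f x‖ ≤ C) : LipschitzWith C.toNNReal f := by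
  refine lipschitzWith_of_nnnorm_fderiv_le hf fun x => ?_
  rw [← toDual_gradient, LinearIsometryEquiv.nnnorm_map]
  exact NNReal.le_toNNReal_of_coe_le (hC x)

theorem stmt14_general {E F : Type*} [NormedAddCommGroup E] [NormedSpace ℝ E]
    [FiniteDimensional ℝ E] [MeasurableSpace E] [BorelSpace E] (μ : Measure E)
    [μ.IsAddHaarMeasure] [NormedAddCommGroup F] {α θ C₀ : ℝ} {K : ℝ≥0} {f : E → F} (c : ℝ)
    (hα0 : 0 < α) (hα2 : α < 2) (hθ : 1 - α / 2 < θ) (hf : LipschitzWith K f)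
    (hfb : ∀ x, ‖f x‖ ≤ C₀ * (1 + ‖x‖ ^ 2) ^ ((1 - θ) / 2) + C₀) :
    ∃ C : ℝ, 0 < C ∧ ∀ x : E,
      IntegrableOn (fun z => ‖f (x + z) - f x‖ ^ 2 * (c * ‖z‖ ^ (-(α + finrank ℝ E))))
        {z | z ≠ 0} μ ∧
      ∫ z in {z | z ≠ 0}, ‖f (x + z) - f x‖ ^ 2 * (c * ‖z‖ ^ (-(α + finrank ℝ E))) ∂μ
        ≤ C * (1 + (1 + ‖x‖ ^ 2) ^ (1 - θ)) := by
  set β := max (1 - θ) 0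
  set ν := stableLevyMeasure μ α
  have hβ : 0 ≤ β := le_max_right _ _
  have hβα : 2 * β < α := by linarith [max_lt (by linarith : 1 - θ < α / 2) (half_pos hα0)]
  have hν : Integrable (fun z => levyWeight β ‖z‖) ν :=
    integrable_levyWeight_stableLevyMeasure hα2 hβα
  have hg (y : E) : ‖f y‖ ^ 2 ≤ 4 * C₀ ^ 2 * (1 + ‖y‖ ^ 2) ^ β :=
    sq_le_mul_rpow_max_zero (by simp) (norm_nonneg _) (hfb y)
  set M := (K ^ 2 + 2 * (4 * C₀ ^ 2) * (4 ^ β + 1)) * ∫ z, levyWeight β ‖z‖ ∂ν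
  have hM : 0 ≤ M :=
    mul_nonneg (by positivity) (integral_nonneg fun z => levyWeight_nonneg (norm_nonneg z))
  have h_int (x : E) : ∫ z, ‖f (x + z) - f x‖ ^ 2 ∂ν ≤ M * (1 + (1 + ‖x‖ ^ 2) ^ (1 - θ)) :=
    (integral_norm_add_sub_sq_le hν hf hβ hg x).trans <| mul_le_mul_of_nonneg_left
      (rpow_max_zero_le_one_add_rpow (by positivity) _) hM
  refine ⟨|c| * M + 1, by positivity, fun x => ?_⟩
  simp only [mul_left_comm _ c]
  refine ⟨(integrable_stableLevyMeasure_iff.1 (integrable_norm_add_sub_sq hν hf hβ hg x)).const_mul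
    c, ?_⟩
  rw [integral_const_mul, ← integral_stableLevyMeasure]
  calc c * ∫ z, ‖f (x + z) - f x‖ ^ 2 ∂ν
      ≤ |c| * (M * (1 + (1 + ‖x‖ ^ 2) ^ (1 - θ))) := by
        gcongr
        exacts [le_abs_self c, h_int x]
    _ ≤ (|c| * M + 1) * (1 + (1 + ‖x‖ ^ 2) ^ (1 - θ)) := by
        rw [← mul_assoc]
        gcongr
        exact le_add_of_nonneg_right zero_le_one

/-- Carré-du-champ bound in the superlinear regime: for `α ∈ (1,2)`, `θ > 1 - α/2`, and
`f ∈ C¹(ℝ^d)` with `|∇f(x)| ≤ C₀` and `|f(x)| ≤ C₀(1+|x|²)^{(1-θ)/2} + C₀`, there is `C > 0`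
such that `∫_{ℝ^d∖{0}} [f(x+z) - f(x)]² C_{d,α} |z|^{-(α+d)} dz ≤ C(1+(1+|x|²)^{1-θ})`
for all `x`, the integral being finite. -/
theorem stmt14 (d : ℕ) (hd : 1 ≤ d) (α θ C₀ : ℝ) (hα1 : 1 < α) (hα2 : α < 2)
    (hθ : 1 - α / 2 < θ) (hC₀ : 0 < C₀)
    (f : EuclideanSpace ℝ (Fin d) → ℝ) (hf : ContDiff ℝ 1 f)
    (hgb : ∀ x, ‖gradient f x‖ ≤ C₀)
    (hfb : ∀ x, |f x| ≤ C₀ * (1 + ‖x‖ ^ 2) ^ ((1 - θ) / 2) + C₀) :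
    ∃ C : ℝ, 0 < C ∧ ∀ x : EuclideanSpace ℝ (Fin d),
      IntegrableOn
        (fun z : EuclideanSpace ℝ (Fin d) => (f (x + z) - f x) ^ 2 *
          ((α * (2 : ℝ) ^ (α - 1) * Real.pi ^ (-(d : ℝ) / 2) *
            Real.Gamma ((d + α) / 2) / Real.Gamma (1 - α / 2)) * ‖z‖ ^ (-(α + d))))
        {z : EuclideanSpace ℝ (Fin d) | z ≠ 0} ∧
      ∫ z in {z : EuclideanSpace ℝ (Fin d) | z ≠ 0},
          (f (x + z) - f x) ^ 2 *
            ((α * (2 : ℝ) ^ (α - 1) * Real.pi ^ (-(d : ℝ) / 2) *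
              Real.Gamma ((d + α) / 2) / Real.Gamma (1 - α / 2)) * ‖z‖ ^ (-(α + d)))
        ≤ C * (1 + (1 + ‖x‖ ^ 2) ^ (1 - θ)) := by
  simpa only [Real.norm_eq_abs, sq_abs, finrank_euclideanSpace_fin] using
    stmt14_general volume _ (zero_lt_one.trans hα1) hα2 hθ
      (lipschitzWith_of_norm_gradient_le (hf.differentiable one_ne_zero) hgb) hfb
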